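/- Let -1/2 < s₀ ≤ 0, let 2 ≤ p ≤ 4, and let s ≤ 0 satisfy s < -1 + 2/p. Then there exists b₁ > 1/2 such that for every b with 1/2 < b < b₁ and every Schwartz function ψ : ℝ → ℂ there is a constant C > 0 with the following property: for every sequence α : ℤ → ℂ with ∑_{k∈ℤ} ⟨k⟩^{s₀p} |α_k|^p < ∞, defining for q ∈ ℤ and τ ∈ ℝ the quantity ĉ_q(τ) = ∑_{n∈ℤ} conj(α_n) · conj(α_{-n-q}) · ψ̂(τ - n² - (n+q)²), one has ∑_{q∈ℤ} ∫_ℝ ⟨τ + q²⟩^{2(b-1)} ⟨q⟩^{2s} |ĉ_q(τ)|² dτ ≤ C (∑_{k∈ℤ} ⟨k⟩^{s₀p} |α_k|^p)^{4/p}. -/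

import Mathlib

/-- The Japanese bracket `⟨x⟩ = (1 + x²)^{1/2}`. -/
noncomputable def jb (x : ℝ) : ℝ := Real.sqrt (1 + x ^ 2)

/-- The time-Fourier transform `ψ̂(τ) = ∫_ℝ e^{-iτt} ψ(t) dt`. -/
noncomputable def ft (ψ : ℝ → ℂ) (τ : ℝ) : ℂ :=
  ∫ t : ℝ, Complex.exp (-Complex.I * (τ : ℂ) * (t : ℂ)) * ψ t

/-!
The decay of `ψ̂` concentrates `ĉ_q(τ)` near the times `τ = n² + (n + q)²`. Boundedly many integers
`n` have `n² + (n + q)²` within distance one of a given `τ`, so Cauchy–Schwarz in `n` bounds the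
`τ`-integral by the diagonal sum of `|α_n|² |α_k|² ⟨n² + k² + q²⟩^{2(b-1)}`, where `k = -n - q`.
There is no resonance: `⟨n² + k² + q²⟩ ≥ ⟨n⟩⟨k⟩` for integers, so as soon as `b ≤ 1 + s₀` the
modulation weight is at most `⟨n⟩^{2s₀} ⟨k⟩^{2s₀}`. With `X_k = (⟨k⟩^{s₀} |α_k|)^p` what is left is
the sum of `X_n^{2/p} X_k^{2/p} ⟨q⟩^{2s}`; since `s < -1 + 2/p`, the last factor is dominated by the
power `2 - 4/p` of a summable weight, and the three exponents add up to `2`, as required by Young's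
inequality.
-/

open MeasureTheory
open scoped ENNReal

variable {b e p s s₀ : ℝ}

section JapaneseBracket

lemma one_le_jb (x : ℝ) : 1 ≤ jb x :=
  Real.one_le_sqrt.2 (le_add_of_nonneg_right (sq_nonneg x))

lemma jb_pos (x : ℝ) : 0 < jb x := one_pos.trans_le (one_le_jb x)

lemma jb_sq (x : ℝ) : jb x ^ 2 = 1 + x ^ 2 := Real.sq_sqrt (by positivity)

lemma jb_neg (x : ℝ) : jb (-x) = jb x := by simp only [jb, neg_sq]

lemma jb_le_jb {x y : ℝ} (h : |x| ≤ |y|) : jb x ≤ jb y :=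
  Real.sqrt_le_sqrt (by gcongr 1 + ?_; exact sq_le_sq.2 h)

lemma jb_le_one_add_abs (x : ℝ) : jb x ≤ 1 + |x| := by
  simpa only [jb, Real.norm_eq_abs, sq_abs] using sqrt_one_add_norm_sq_le x

lemma abs_le_jb (x : ℝ) : |x| ≤ jb x :=
  Real.abs_le_sqrt (le_add_of_nonneg_left zero_le_one)

lemma jb_le_two_mul_jb_sub_mul_jb (x y : ℝ) : jb y ≤ 2 * jb (x - y) * jb x := by
  have hx := jb_pos x
  have hxy := jb_pos (x - y)
  refine le_of_sq_le_sq ?_ (by positivity)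
  rw [mul_pow, mul_pow, jb_sq, jb_sq, jb_sq]
  nlinarith [sq_nonneg (2 * x - y), mul_nonneg (sq_nonneg (x - y)) (sq_nonneg x)]

lemma jb_sq_le_two_mul_jb {t z : ℝ} (h : t ^ 2 ≤ |z|) : jb t ^ 2 ≤ 2 * jb z := by
  rw [jb_sq]
  linarith [one_le_jb z, abs_le_jb z]

lemma jb_mul_jb_le_jb_sq_add_sq_add_sq (n k : ℤ) (x : ℝ) :
    jb n * jb k ≤ jb ((n : ℝ) ^ 2 + (k : ℝ) ^ 2 + x ^ 2) := by
  have int_sq_le (m : ℤ) : (m : ℝ) ^ 2 ≤ ((m : ℝ) ^ 2) ^ 2 := by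
    have h := Int.le_self_sq (m ^ 2)
    exact_mod_cast h
  have drop_x : ((n : ℝ) ^ 2 + (k : ℝ) ^ 2) ^ 2 ≤ ((n : ℝ) ^ 2 + (k : ℝ) ^ 2 + x ^ 2) ^ 2 := by
    gcongr ?_ ^ 2
    exact le_add_of_nonneg_right (sq_nonneg x)
  refine le_of_sq_le_sq ?_ (jb_pos _).le
  rw [mul_pow, jb_sq, jb_sq, jb_sq]
  nlinarith [int_sq_le n, int_sq_le k, mul_nonneg (sq_nonneg (n : ℝ)) (sq_nonneg (k : ℝ))]

/-- The Japanese bracket with values in `ℝ≥0∞`, where sums and integrals of its powers need no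
convergence hypotheses. -/
noncomputable def ejb (x : ℝ) : ℝ≥0∞ := ENNReal.ofReal (jb x)

lemma ofReal_jb_rpow (x e : ℝ) : ENNReal.ofReal (jb x ^ e) = ejb x ^ e :=
  (ENNReal.ofReal_rpow_of_pos (jb_pos x)).symm

lemma enorm_jb_rpow (x e : ℝ) : ‖jb x ^ e‖ₑ = ejb x ^ e := by
  rw [Real.enorm_of_nonneg (Real.rpow_nonneg (jb_pos x).le e), ofReal_jb_rpow]

lemma one_le_ejb (x : ℝ) : 1 ≤ ejb x := ENNReal.one_le_ofReal.2 (one_le_jb x)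

lemma ejb_ne_zero (x : ℝ) : ejb x ≠ 0 := (one_pos.trans_le (one_le_ejb x)).ne'

lemma ejb_ne_top (x : ℝ) : ejb x ≠ ∞ := ENNReal.ofReal_ne_top

@[fun_prop]
lemma measurable_ejb : Measurable ejb := by
  unfold ejb jb
  fun_prop

lemma ennreal_rpow_le_rpow_of_nonpos {x y : ℝ≥0∞} (hxy : x ≤ y) (he : e ≤ 0) :
    y ^ e ≤ x ^ e := by
  rw [← neg_neg e, ENNReal.rpow_neg, ENNReal.rpow_neg x, ENNReal.inv_le_inv]
  exact ENNReal.rpow_le_rpow hxy (neg_nonneg.2 he)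

lemma ejb_rpow_le_of_le_mul {a y : ℝ≥0∞} (ha₀ : a ≠ 0) (ha : a ≠ ∞) {x : ℝ}
    (h : y ≤ a * ejb x) (he : e ≤ 0) : ejb x ^ e ≤ a ^ (-e) * y ^ e :=
  calc ejb x ^ e = a ^ (-e) * (a * ejb x) ^ e := by
        rw [ENNReal.mul_rpow_of_ne_top ha (ejb_ne_top x), ← mul_assoc,
          ← ENNReal.rpow_add _ _ ha₀ ha, neg_add_cancel, ENNReal.rpow_zero, one_mul]
    _ ≤ a ^ (-e) * y ^ e := mul_le_mul_right (ennreal_rpow_le_rpow_of_nonpos h he) _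

/-- Peetre's inequality. -/
lemma ejb_rpow_le_mul_ejb_sub_rpow_mul (he : e ≤ 0) (x y : ℝ) :
    ejb x ^ e ≤ 2 ^ (-e) * ejb (x - y) ^ (-e) * ejb y ^ e := by
  rw [← ENNReal.mul_rpow_of_nonneg _ _ (neg_nonneg.2 he)]
  refine ejb_rpow_le_of_le_mul (mul_ne_zero two_ne_zero (ejb_ne_zero _))
    (ENNReal.mul_ne_top ENNReal.ofNat_ne_top (ejb_ne_top _)) ?_ he
  have h := ENNReal.ofReal_le_ofReal (jb_le_two_mul_jb_sub_mul_jb x y)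
  have hxy := (jb_pos (x - y)).le
  rwa [ENNReal.ofReal_mul (by positivity), ENNReal.ofReal_mul zero_le_two,
    ENNReal.ofReal_ofNat] at h

lemma ejb_rpow_neg_le_of_sq_le_abs {β : ℝ} (hβ : 0 ≤ β) {t z : ℝ} (h : t ^ 2 ≤ |z|) :
    ejb z ^ (-β) ≤ 2 ^ β * ejb t ^ (-(2 * β)) := by
  have ht : ejb t ^ 2 ≤ 2 * ejb z := by
    rw [ejb, ejb, ← ENNReal.ofReal_pow (jb_pos t).le, ← ENNReal.ofReal_ofNat,
      ← ENNReal.ofReal_mul zero_le_two]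
    exact ENNReal.ofReal_le_ofReal (jb_sq_le_two_mul_jb h)
  have h := ejb_rpow_le_of_le_mul two_ne_zero ENNReal.ofNat_ne_top ht (neg_nonpos.2 hβ)
  rwa [neg_neg, ← ENNReal.rpow_two, ← ENNReal.rpow_mul, mul_neg] at h

lemma ejb_sq_add_sq_add_sq_rpow_le (hs₀ : s₀ ≤ 0) (he : e ≤ 2 * s₀) (n k : ℤ) (x : ℝ) :
    ejb ((n : ℝ) ^ 2 + (k : ℝ) ^ 2 + x ^ 2) ^ e ≤ (ejb n ^ s₀ * ejb k ^ s₀) ^ 2 := by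
  have hnk : ejb n * ejb k ≤ ejb ((n : ℝ) ^ 2 + (k : ℝ) ^ 2 + x ^ 2) := by
    rw [ejb, ejb, ← ENNReal.ofReal_mul (jb_pos _).le]
    exact ENNReal.ofReal_le_ofReal (jb_mul_jb_le_jb_sq_add_sq_add_sq n k x)
  calc ejb ((n : ℝ) ^ 2 + (k : ℝ) ^ 2 + x ^ 2) ^ e
      ≤ ejb ((n : ℝ) ^ 2 + (k : ℝ) ^ 2 + x ^ 2) ^ (2 * s₀) :=
        ENNReal.rpow_le_rpow_of_exponent_le (one_le_ejb _) he
    _ ≤ (ejb n * ejb k) ^ (2 * s₀) := ennreal_rpow_le_rpow_of_nonpos hnk (by linarith)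
    _ = (ejb n ^ s₀ * ejb k ^ s₀) ^ 2 := by
        rw [mul_comm 2, ENNReal.rpow_mul, ENNReal.rpow_two,
          ENNReal.mul_rpow_of_ne_top (ejb_ne_top _) (ejb_ne_top _)]

end JapaneseBracket

section LatticeSums

lemma tsum_ejb_intCast_rpow_ne_top {β : ℝ} (hβ : 1 < β) : ∑' n : ℤ, ejb n ^ (-β) ≠ ∞ := by
  suffices h : Summable fun n : ℤ => jb n ^ (-β) by
    simpa only [ofReal_jb_rpow] using h.tsum_ofReal_ne_top
  refine .of_norm_bounded_eventually (Real.summable_abs_int_rpow hβ) ?_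
  filter_upwards [(Set.finite_singleton (0 : ℤ)).compl_mem_cofinite] with n hn
  rw [Real.norm_of_nonneg (Real.rpow_nonneg (jb_pos _).le _)]
  exact Real.rpow_le_rpow_of_nonpos (abs_pos.2 (Int.cast_ne_zero.2 hn)) (abs_le_jb n) (by linarith)

lemma exists_tsum_ejb_intCast_add_rpow_le {β : ℝ} (hβ : 1 < β) :
    ∃ B : ℝ≥0∞, B ≠ ∞ ∧ ∀ u : ℝ, ∑' n : ℤ, ejb (n + u) ^ (-β) ≤ B := by
  have hβ₀ : 0 ≤ β := by linarith
  refine ⟨2 ^ β * 2 ^ β * ∑' n : ℤ, ejb n ^ (-β), ENNReal.mul_ne_top (by finiteness)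
    (tsum_ejb_intCast_rpow_ne_top hβ), fun u => ?_⟩
  rw [← (Equiv.subRight ⌊u⌋).tsum_eq, ← ENNReal.tsum_mul_left]
  gcongr with n
  have hfract : ((Equiv.subRight ⌊u⌋ n : ℤ) : ℝ) + u = n + Int.fract u := by
    rw [Equiv.subRight_apply, Int.cast_sub, Int.fract]
    ring
  have fract_le : ejb (Int.fract u) ≤ 2 := by
    rw [ejb, ENNReal.ofReal_le_ofNat]
    have := jb_le_one_add_abs (Int.fract u)
    rw [abs_of_nonneg (Int.fract_nonneg u)] at this
    linarith [Int.fract_lt_one u]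
  have peetre := ejb_rpow_le_mul_ejb_sub_rpow_mul (neg_nonpos.2 hβ₀) (n + Int.fract u) n
  rw [add_sub_cancel_left, neg_neg] at peetre
  rw [hfract]
  exact peetre.trans (by gcongr)

lemma sq_abs_sub_sqrt_le (x m : ℝ) : (|m| - √x) ^ 2 ≤ |x - m ^ 2| := by
  rcases le_total x 0 with hx | hx
  · -- `√x` has the junk value `0` here.
    rw [Real.sqrt_eq_zero_of_nonpos hx, sub_zero, sq_abs, abs_of_nonpos (by nlinarith)]
    linarith
  · have factor : |x - m ^ 2| = |(|m| - √x)| * (|m| + √x) := by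
      rw [abs_sub_comm, ← abs_of_nonneg (show 0 ≤ |m| + √x by positivity), ← abs_mul]
      congr 1
      nlinarith [Real.sq_sqrt hx, sq_abs m]
    rw [factor, ← sq_abs, sq]
    gcongr
    rw [abs_le]
    constructor <;> linarith [abs_nonneg m, Real.sqrt_nonneg x]

lemma ejb_sub_sq_rpow_le {β : ℝ} (hβ : 0 ≤ β) (x m : ℝ) :
    ejb (x - m ^ 2) ^ (-β) ≤
      2 ^ β * (ejb (m - √x) ^ (-(2 * β)) + ejb (m + √x) ^ (-(2 * β))) := by
  refine (ejb_rpow_neg_le_of_sq_le_abs hβ (sq_abs_sub_sqrt_le x m)).trans ?_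
  gcongr
  rcases abs_choice m with hm | hm <;> rw [hm]
  · exact le_self_add
  · rw [← neg_add', ejb, jb_neg, ← ejb]
    exact le_add_self

lemma exists_tsum_ejb_sub_sq_rpow_le {β : ℝ} (hβ : 1 / 2 < β) :
    ∃ B : ℝ≥0∞, B ≠ ∞ ∧ ∀ x u : ℝ, ∑' n : ℤ, ejb (x - (n + u) ^ 2) ^ (-β) ≤ B := by
  obtain ⟨B, hB, hle⟩ := exists_tsum_ejb_intCast_add_rpow_le (β := 2 * β) (by linarith)
  have hβ₀ : 0 ≤ β := by linarith
  refine ⟨2 ^ β * (B + B), by finiteness, fun x u => ?_⟩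
  calc ∑' n : ℤ, ejb (x - (n + u) ^ 2) ^ (-β)
      ≤ ∑' n : ℤ, 2 ^ β * (ejb (n + (u - √x)) ^ (-(2 * β)) + ejb (n + (u + √x)) ^ (-(2 * β))) := by
        gcongr with n
        rw [← add_sub_assoc, ← add_assoc]
        exact ejb_sub_sq_rpow_le hβ₀ x (n + u)
    _ ≤ 2 ^ β * (B + B) := by
        rw [ENNReal.tsum_mul_left, ENNReal.tsum_add]
        gcongr <;> exact hle _

end LatticeSums

section WeightedEstimates

lemma lintegral_ejb_rpow_neg_two : ∫⁻ τ, ejb τ ^ (-2 : ℝ) = ENNReal.ofReal Real.pi := by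
  have inv_sq (τ : ℝ) : ejb τ ^ (-2 : ℝ) = ENNReal.ofReal (1 + τ ^ 2)⁻¹ := by
    rw [← ofReal_jb_rpow, Real.rpow_neg (jb_pos τ).le, Real.rpow_two, jb_sq]
  simp_rw [inv_sq]
  rw [← ofReal_integral_eq_lintegral_ofReal integrable_inv_one_add_sq
    (.of_forall fun τ => by positivity), integral_univ_inv_one_add_sq]

lemma lintegral_ejb_add_rpow_mul_ejb_sub_rpow_le (he : e ≤ 0) (c m : ℝ) :
    ∫⁻ τ, ejb (τ + c) ^ e * ejb (τ - m) ^ (e - 2) ≤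
      2 ^ (-e) * ENNReal.ofReal Real.pi * ejb (m + c) ^ e := by
  have pointwise (τ : ℝ) : ejb (τ + c) ^ e * ejb (τ - m) ^ (e - 2) ≤
      2 ^ (-e) * ejb (m + c) ^ e * ejb (τ - m) ^ (-2 : ℝ) :=
    calc ejb (τ + c) ^ e * ejb (τ - m) ^ (e - 2)
        ≤ 2 ^ (-e) * ejb (τ - m) ^ (-e) * ejb (m + c) ^ e * ejb (τ - m) ^ (e - 2) := by
          gcongr
          simpa only [add_sub_add_right_eq_sub] using
            ejb_rpow_le_mul_ejb_sub_rpow_mul he (τ + c) (m + c)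
      _ = 2 ^ (-e) * ejb (m + c) ^ e * (ejb (τ - m) ^ (-e) * ejb (τ - m) ^ (e - 2)) := by ring
      _ = 2 ^ (-e) * ejb (m + c) ^ e * ejb (τ - m) ^ (-2 : ℝ) := by
          rw [← ENNReal.rpow_add _ _ (ejb_ne_zero _) (ejb_ne_top _)]
          ring_nf
  refine (lintegral_mono pointwise).trans_eq ?_
  rw [lintegral_const_mul _ (by fun_prop),
    lintegral_sub_right_eq_self (fun τ => ejb τ ^ (-2 : ℝ)), lintegral_ejb_rpow_neg_two]
  ring

lemma sq_tsum_mul_le {ι : Type*} [Countable ι] (f w : ι → ℝ≥0∞) :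
    (∑' i, f i * w i) ^ 2 ≤ (∑' i, w i) * ∑' i, f i ^ 2 * w i := by
  let : MeasurableSpace ι := ⊤
  have holder := ENNReal.lintegral_mul_norm_pow_le (μ := Measure.count) (f := w)
    (g := fun i => f i ^ 2 * w i) (measurable_of_countable _).aemeasurable
    (measurable_of_countable _).aemeasurable one_half_pos.le one_half_pos.le (add_halves 1)
  simp only [lintegral_count] at holder
  have sqrt_mul_sqrt (i : ι) :
      w i ^ (1 / 2 : ℝ) * (f i ^ 2 * w i) ^ (1 / 2 : ℝ) = f i * w i := by
    rw [← ENNReal.mul_rpow_of_nonneg _ _ one_half_pos.le,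
      show w i * (f i ^ 2 * w i) = (f i * w i) ^ 2 by ring, ← ENNReal.rpow_two,
      ← ENNReal.rpow_mul, mul_one_div_cancel two_ne_zero, ENNReal.rpow_one]
  simp only [sqrt_mul_sqrt] at holder
  rw [← ENNReal.mul_rpow_of_nonneg _ _ one_half_pos.le, one_div,
    ENNReal.le_rpow_inv_iff two_pos, ENNReal.rpow_two] at holder
  exact holder

lemma lintegral_ejb_rpow_mul_sq_tsum_le {ι : Type*} [Countable ι] (he : e ≤ 0) (m : ι → ℝ)
    {B : ℝ≥0∞} (hB : ∀ τ, ∑' i, ejb (τ - m i) ^ (-2 : ℝ) ≤ B) (f : ι → ℝ≥0∞) (c : ℝ) :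
    ∫⁻ τ, ejb (τ + c) ^ e * (∑' i, f i * ejb (τ - m i) ^ (e - 2)) ^ 2 ≤
      B * (2 ^ (-e) * ENNReal.ofReal Real.pi) * ∑' i, f i ^ 2 * ejb (m i + c) ^ e := by
  have cauchy_schwarz (τ : ℝ) :
      (∑' i, f i * ejb (τ - m i) ^ (e - 2)) ^ 2 ≤
        B * ∑' i, f i ^ 2 * ejb (τ - m i) ^ (e - 2) := by
    refine (sq_tsum_mul_le f _).trans ?_
    gcongr
    refine (ENNReal.tsum_le_tsum fun i => ?_).trans (hB τ)
    exact ENNReal.rpow_le_rpow_of_exponent_le (one_le_ejb _) (by linarith)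
  calc ∫⁻ τ, ejb (τ + c) ^ e * (∑' i, f i * ejb (τ - m i) ^ (e - 2)) ^ 2
      ≤ ∫⁻ τ, B * ∑' i, f i ^ 2 * (ejb (τ + c) ^ e * ejb (τ - m i) ^ (e - 2)) := by
        refine lintegral_mono fun τ => ?_
        refine (mul_le_mul_right (cauchy_schwarz τ) _).trans_eq ?_
        rw [mul_left_comm, ← ENNReal.tsum_mul_left]
        simp only [mul_left_comm]
    _ = B * ∑' i, f i ^ 2 * ∫⁻ τ, ejb (τ + c) ^ e * ejb (τ - m i) ^ (e - 2) := by
        rw [lintegral_const_mul _ (by fun_prop), lintegral_tsum fun i => by fun_prop]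
        congr! 3 with i
        rw [lintegral_const_mul _ (by fun_prop)]
    _ ≤ B * ∑' i, f i ^ 2 * (2 ^ (-e) * ENNReal.ofReal Real.pi * ejb (m i + c) ^ e) := by
        gcongr
        exact lintegral_ejb_add_rpow_mul_ejb_sub_rpow_le he c _
    _ = B * (2 ^ (-e) * ENNReal.ofReal Real.pi) * ∑' i, f i ^ 2 * ejb (m i + c) ^ e := by
        rw [mul_assoc, ← ENNReal.tsum_mul_left (a := 2 ^ (-e) * ENNReal.ofReal Real.pi)]
        simp only [mul_left_comm]

end WeightedEstimates

section Young

variable {G : Type*} [AddCommGroup G]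

lemma tsum_tsum_mul_neg_sub (f g : G → ℝ≥0∞) :
    ∑' q, ∑' n, f n * g (-n - q) = (∑' n, f n) * ∑' n, g n := by
  rw [ENNReal.tsum_comm, ← ENNReal.tsum_mul_right]
  refine tsum_congr fun n => ?_
  rw [ENNReal.tsum_mul_left, ← (Equiv.subLeft (-n)).tsum_eq g]
  rfl

/-- Young's inequality for convolutions, in trilinear form. -/
lemma tsum_tsum_rpow_mul_rpow_mul_rpow_le [Countable G] (f g h : G → ℝ≥0∞) {a b c : ℝ}
    (ha : a ≤ 1) (hb : b ≤ 1) (hc : c ≤ 1) (habc : a + b + c = 2) :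
    ∑' q, ∑' n, f n ^ a * g (-n - q) ^ b * h q ^ c ≤
      (∑' n, f n) ^ a * (∑' n, g n) ^ b * (∑' n, h n) ^ c := by
  -- Hölder is applied to the pairwise products, whose sums over `(q, n)` all factor.
  have regroup (x y z : ℝ≥0∞) :
      x ^ a * y ^ b * z ^ c = (x * y) ^ (1 - c) * (x * z) ^ (1 - b) * (y * z) ^ (1 - a) := by
    have split (t : ℝ≥0∞) {u v w : ℝ} (hv : v ≤ 1) (hw : w ≤ 1) (huvw : u + v + w = 2) :
        t ^ u = t ^ (1 - v) * t ^ (1 - w) := by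
      rw [← ENNReal.rpow_add_of_nonneg _ _ (sub_nonneg.2 hv) (sub_nonneg.2 hw)]
      congr 1
      linarith
    rw [split x hc hb (by linarith), split y hc ha (by linarith), split z hb ha (by linarith),
      ENNReal.mul_rpow_of_nonneg _ _ (sub_nonneg.2 hc),
      ENNReal.mul_rpow_of_nonneg _ _ (sub_nonneg.2 hb),
      ENNReal.mul_rpow_of_nonneg _ _ (sub_nonneg.2 ha)]
    ring
  have sum_fg : ∑' z : G × G, f z.2 * g (-z.2 - z.1) = (∑' n, f n) * ∑' n, g n := by
    rw [ENNReal.tsum_prod', tsum_tsum_mul_neg_sub]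
  have sum_fh : ∑' z : G × G, f z.2 * h z.1 = (∑' n, f n) * ∑' n, h n := by
    rw [ENNReal.tsum_prod']
    simp_rw [ENNReal.tsum_mul_right, ENNReal.tsum_mul_left]
  have sum_gh : ∑' z : G × G, g (-z.2 - z.1) * h z.1 = (∑' n, g n) * ∑' n, h n := by
    rw [ENNReal.tsum_prod', ENNReal.tsum_comm, mul_comm, ← tsum_tsum_mul_neg_sub]
    simp only [mul_comm, ← neg_add', add_comm]
  let : MeasurableSpace G := ⊤
  have holder := ENNReal.lintegral_prod_norm_pow_le (μ := Measure.count) Finset.univ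
    (f := ![fun z : G × G => f z.2 * g (-z.2 - z.1), fun z => f z.2 * h z.1,
      fun z => g (-z.2 - z.1) * h z.1])
    (p := ![1 - c, 1 - b, 1 - a]) (fun _ _ => (measurable_of_countable _).aemeasurable)
    (by simp only [Fin.sum_univ_three, Matrix.cons_val]; linarith)
    (by intro i _; fin_cases i <;> simpa)
  simp only [lintegral_count, Fin.prod_univ_three, Matrix.cons_val] at holder
  rw [sum_fg, sum_fh, sum_gh, ← regroup, ENNReal.tsum_prod'] at holder
  simpa only [← regroup] using holder

end Young

section PicardIterate

/-- The quantity `ĉ_q(τ)`, with an arbitrary function `φ` in place of `ψ̂`. -/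
noncomputable def picardCoeff (φ : ℝ → ℂ) (α : ℤ → ℂ) (q : ℤ) (τ : ℝ) : ℂ :=
  ∑' n : ℤ, (starRingEnd ℂ) (α n) * (starRingEnd ℂ) (α (-n - q)) *
    φ (τ - (n : ℝ) ^ 2 - ((n : ℝ) + (q : ℝ)) ^ 2)

variable {φ : ℝ → ℂ}

lemma enorm_picardCoeff_le {D : ℝ≥0∞} (hφ : ∀ x, ‖φ x‖ₑ ≤ D * ejb x ^ e) (α : ℤ → ℂ) (q : ℤ)
    (τ : ℝ) : ‖picardCoeff φ α q τ‖ₑ ≤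
      D * ∑' n : ℤ, ‖α n‖ₑ * ‖α (-n - q)‖ₑ * ejb (τ - ((n : ℝ) ^ 2 + ((n : ℝ) + q) ^ 2)) ^ e := by
  refine enorm_tsum_le_tsum_enorm.trans ?_
  rw [← ENNReal.tsum_mul_left]
  gcongr with n
  rw [enorm_mul, enorm_mul, RCLike.enorm_conj, RCLike.enorm_conj, mul_left_comm, sub_sub]
  gcongr
  exact hφ _

lemma exists_tsum_ejb_sub_sq_add_sq_rpow_le :
    ∃ B : ℝ≥0∞, B ≠ ∞ ∧ ∀ (q : ℤ) (τ : ℝ),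
      ∑' n : ℤ, ejb (τ - ((n : ℝ) ^ 2 + ((n : ℝ) + q) ^ 2)) ^ (-2 : ℝ) ≤ B := by
  obtain ⟨B, hB, hle⟩ := exists_tsum_ejb_sub_sq_rpow_le (β := 2) (by norm_num)
  refine ⟨B, hB, fun q τ => (ENNReal.tsum_le_tsum fun n => ?_).trans
    (hle (τ / 2 - (q : ℝ) ^ 2 / 4) (q / 2))⟩
  have complete_square : τ - ((n : ℝ) ^ 2 + ((n : ℝ) + q) ^ 2) =
      2 * (τ / 2 - (q : ℝ) ^ 2 / 4 - (n + q / 2) ^ 2) := by ring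
  refine ennreal_rpow_le_rpow_of_nonpos (ENNReal.ofReal_le_ofReal (jb_le_jb ?_)) (by norm_num)
  rw [complete_square, abs_mul, abs_two]
  linarith [abs_nonneg (τ / 2 - (q : ℝ) ^ 2 / 4 - (n + q / 2) ^ 2)]

lemma exists_lintegral_ejb_rpow_mul_picardCoeff_sq_le (he : e ≤ 0) {D : ℝ≥0∞} (hD : D ≠ ∞)
    (hφ : ∀ x, ‖φ x‖ₑ ≤ D * ejb x ^ (e - 2)) :
    ∃ A : ℝ≥0∞, A ≠ ∞ ∧ ∀ (α : ℤ → ℂ) (q : ℤ),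
      ∫⁻ τ, ejb (τ + (q : ℝ) ^ 2) ^ e * ‖picardCoeff φ α q τ‖ₑ ^ 2 ≤
        A * ∑' n : ℤ, (‖α n‖ₑ * ‖α (-n - q)‖ₑ) ^ 2 *
          ejb ((n : ℝ) ^ 2 + ((n : ℝ) + q) ^ 2 + (q : ℝ) ^ 2) ^ e := by
  obtain ⟨B, hB, hle⟩ := exists_tsum_ejb_sub_sq_add_sq_rpow_le
  have : 0 ≤ -e := neg_nonneg.2 he
  refine ⟨D ^ 2 * (B * (2 ^ (-e) * ENNReal.ofReal Real.pi)), by finiteness, fun α q => ?_⟩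
  calc ∫⁻ τ, ejb (τ + (q : ℝ) ^ 2) ^ e * ‖picardCoeff φ α q τ‖ₑ ^ 2
      ≤ ∫⁻ τ, D ^ 2 * (ejb (τ + (q : ℝ) ^ 2) ^ e * (∑' n : ℤ, ‖α n‖ₑ * ‖α (-n - q)‖ₑ *
          ejb (τ - ((n : ℝ) ^ 2 + ((n : ℝ) + q) ^ 2)) ^ (e - 2)) ^ 2) := by
        refine lintegral_mono fun τ => ?_
        rw [mul_left_comm, ← mul_pow]
        gcongr
        exact enorm_picardCoeff_le hφ α q τ
    _ ≤ _ := by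
        rw [lintegral_const_mul _ (by fun_prop), mul_assoc]
        gcongr
        exact lintegral_ejb_rpow_mul_sq_tsum_le he _ (hle q) _ _

lemma tsum_ejb_rpow_mul_tsum_le (hs₀ : s₀ ≤ 0) (hp2 : 2 ≤ p) (hp4 : p ≤ 4) (he : e ≤ 2 * s₀)
    {β : ℝ} (hβ : β * (2 - 4 / p) ≤ -(2 * s)) (α : ℤ → ℂ) :
    ∑' q : ℤ, ejb q ^ (2 * s) * ∑' n : ℤ, (‖α n‖ₑ * ‖α (-n - q)‖ₑ) ^ 2 *
        ejb ((n : ℝ) ^ 2 + ((n : ℝ) + q) ^ 2 + (q : ℝ) ^ 2) ^ e ≤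
      (∑' q : ℤ, ejb q ^ (-β)) ^ (2 - 4 / p) *
        (∑' k : ℤ, (ejb k ^ s₀ * ‖α k‖ₑ) ^ p) ^ (4 / p) := by
  have hp : 0 < p := by linarith
  have h2p : 2 / p ≤ 1 := (div_le_one hp).2 hp2
  have h4p : 1 ≤ 4 / p := (one_le_div hp).2 hp4
  set X : ℤ → ℝ≥0∞ := fun k => (ejb k ^ s₀ * ‖α k‖ₑ) ^ p
  have X_rpow (k : ℤ) : X k ^ (2 / p) = (ejb k ^ s₀ * ‖α k‖ₑ) ^ 2 := by
    rw [← ENNReal.rpow_mul, mul_div_cancel₀ _ hp.ne', ENNReal.rpow_two]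
  have weight_q (q : ℤ) : ejb q ^ (2 * s) ≤ (ejb q ^ (-β)) ^ (2 - 4 / p) := by
    rw [← ENNReal.rpow_mul]
    exact ENNReal.rpow_le_rpow_of_exponent_le (one_le_ejb _) (by linarith)
  have weight_resonance (q n : ℤ) : ejb ((n : ℝ) ^ 2 + ((n : ℝ) + q) ^ 2 + (q : ℝ) ^ 2) ^ e ≤
      (ejb n ^ s₀ * ejb (-n - q : ℤ) ^ s₀) ^ 2 := by
    rw [show ((n : ℝ) + q) ^ 2 = ((-n - q : ℤ) : ℝ) ^ 2 by push_cast; ring]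
    exact ejb_sq_add_sq_add_sq_rpow_le hs₀ he n (-n - q) q
  have termwise (q n : ℤ) : ejb q ^ (2 * s) * ((‖α n‖ₑ * ‖α (-n - q)‖ₑ) ^ 2 *
        ejb ((n : ℝ) ^ 2 + ((n : ℝ) + q) ^ 2 + (q : ℝ) ^ 2) ^ e) ≤
      X n ^ (2 / p) * X (-n - q) ^ (2 / p) * (ejb q ^ (-β)) ^ (2 - 4 / p) :=
    calc _ ≤ (ejb q ^ (-β)) ^ (2 - 4 / p) * ((‖α n‖ₑ * ‖α (-n - q)‖ₑ) ^ 2 *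
          (ejb n ^ s₀ * ejb (-n - q : ℤ) ^ s₀) ^ 2) := by
          gcongr
          exacts [weight_q q, weight_resonance q n]
      _ = _ := by
          rw [X_rpow, X_rpow]
          ring
  calc _ ≤ ∑' q : ℤ, ∑' n : ℤ,
        X n ^ (2 / p) * X (-n - q) ^ (2 / p) * (ejb q ^ (-β)) ^ (2 - 4 / p) := by
        gcongr with q
        rw [← ENNReal.tsum_mul_left]
        exact ENNReal.tsum_le_tsum (termwise q)
    _ ≤ (∑' k, X k) ^ (2 / p) * (∑' k, X k) ^ (2 / p) * (∑' q : ℤ, ejb q ^ (-β)) ^ (2 - 4 / p) :=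
        tsum_tsum_rpow_mul_rpow_mul_rpow_le X X _ h2p h2p (by linarith) (by ring)
    _ = _ := by
        rw [← ENNReal.rpow_add_of_nonneg _ _ (by positivity) (by positivity), mul_comm]
        congr 2
        ring

theorem stmt0_general (hs₀ : s₀ ≤ 0) (hp2 : 2 ≤ p) (hp4 : p ≤ 4) (hs : s < -1 + 2 / p)
    (hb : b ≤ 1 + s₀) {D : ℝ} (hφ : ∀ x, ‖φ x‖ ≤ D * jb x ^ (2 * b - 4)) :
    ∃ C : ℝ, 0 < C ∧ ∀ α : ℤ → ℂ,
      ∑' q : ℤ, ∫⁻ τ, ejb (τ + (q : ℝ) ^ 2) ^ (2 * (b - 1)) * ejb q ^ (2 * s) *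
          ‖picardCoeff φ α q τ‖ₑ ^ 2 ≤
        ENNReal.ofReal C * (∑' k : ℤ, (ejb k ^ s₀ * ‖α k‖ₑ) ^ p) ^ (4 / p) := by
  have hφ' (x : ℝ) : ‖φ x‖ₑ ≤ ENNReal.ofReal D * ejb x ^ (2 * (b - 1) - 2) := by
    rw [← ofReal_norm, ← ofReal_jb_rpow, ← ENNReal.ofReal_mul' (Real.rpow_nonneg (jb_pos x).le _)]
    convert ENNReal.ofReal_le_ofReal (hφ x) using 4
    ring
  obtain ⟨A, hA, hle⟩ :=
    exists_lintegral_ejb_rpow_mul_picardCoeff_sq_le (by linarith) ENNReal.ofReal_ne_top hφ'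
  obtain ⟨β, hβ1, hβ⟩ : ∃ β : ℝ, 1 < β ∧ β * (2 - 4 / p) ≤ -(2 * s) := by
    -- The extremal choice `-s / (1 - 2 / p)` breaks down at `p = 2`.
    refine ⟨2 / p - s, by linarith, ?_⟩
    have : 0 < 2 / p := by positivity
    rw [show 4 / p = 2 * (2 / p) by ring]
    nlinarith
  set W := (∑' q : ℤ, ejb q ^ (-β)) ^ (2 - 4 / p)
  have hW : W ≠ ∞ := ENNReal.rpow_ne_top_of_nonneg
    (by rw [sub_nonneg, div_le_iff₀] <;> linarith) (tsum_ejb_intCast_rpow_ne_top hβ1)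
  have hAW : A * W ≤ ENNReal.ofReal ((A * W).toReal + 1) :=
    (ENNReal.ofReal_toReal (ENNReal.mul_ne_top hA hW)).ge.trans
      (ENNReal.ofReal_le_ofReal (le_add_of_nonneg_right zero_le_one))
  refine ⟨(A * W).toReal + 1, by positivity, fun α => ?_⟩
  calc _ ≤ ∑' q : ℤ, A * (ejb q ^ (2 * s) * ∑' n : ℤ, (‖α n‖ₑ * ‖α (-n - q)‖ₑ) ^ 2 *
          ejb ((n : ℝ) ^ 2 + ((n : ℝ) + q) ^ 2 + (q : ℝ) ^ 2) ^ (2 * (b - 1))) := by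
        gcongr with q
        simp_rw [mul_right_comm]
        have ejb_q_ne_top := ENNReal.rpow_ne_top_of_ne_zero (y := 2 * s) (ejb_ne_zero q)
          (ejb_ne_top q)
        rw [lintegral_mul_const' _ _ ejb_q_ne_top, mul_left_comm, mul_comm]
        gcongr
        exact hle α q
    _ ≤ A * (W * (∑' k : ℤ, (ejb k ^ s₀ * ‖α k‖ₑ) ^ p) ^ (4 / p)) := by
        rw [ENNReal.tsum_mul_left]
        gcongr
        exact tsum_ejb_rpow_mul_tsum_le hs₀ hp2 hp4 (by linarith) hβ α
    _ ≤ _ := by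
        rw [← mul_assoc]
        gcongr

end PicardIterate

section RealForm

lemma ft_eq_fourier (ψ : SchwartzMap ℝ ℂ) (x : ℝ) :
    ft ψ x = FourierTransform.fourier ψ (x / (2 * Real.pi)) := by
  rw [SchwartzMap.fourier_coe, Real.fourier_real_eq_integral_exp_smul, ft]
  congr! 3 with t
  push_cast
  have : (Real.pi : ℂ) ≠ 0 := mod_cast Real.pi_ne_zero
  field_simp

lemma exists_norm_ft_le_mul_jb_rpow (ψ : SchwartzMap ℝ ℂ) (r : ℝ) :
    ∃ D : ℝ, ∀ x, ‖ft ψ x‖ ≤ D * jb x ^ r := by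
  obtain ⟨k, hk⟩ := exists_nat_ge (-r)
  set M := 2 ^ k * (Finset.Iic (k, 0)).sup (fun m => SchwartzMap.seminorm ℝ m.1 m.2)
    (FourierTransform.fourier ψ)
  have decay (y : ℝ) : (1 + ‖y‖) ^ k * ‖FourierTransform.fourier ψ y‖ ≤ M := by
    simpa only [norm_iteratedFDeriv_zero] using SchwartzMap.one_add_le_sup_seminorm_apply
      (𝕜 := ℝ) (m := (k, 0)) le_rfl le_rfl (FourierTransform.fourier ψ) y
  have jb_le (x : ℝ) : jb x ≤ 2 * Real.pi * (1 + ‖x / (2 * Real.pi)‖) := by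
    rw [norm_div, Real.norm_of_nonneg Real.two_pi_pos.le, mul_add,
      mul_div_cancel₀ _ Real.two_pi_pos.ne', Real.norm_eq_abs]
    linarith [jb_le_one_add_abs x, Real.pi_gt_three]
  refine ⟨(2 * Real.pi) ^ k * M, fun x => ?_⟩
  have jb_pow_mul : jb x ^ k * ‖ft ψ x‖ ≤ (2 * Real.pi) ^ k * M :=
    calc jb x ^ k * ‖ft ψ x‖
        ≤ (2 * Real.pi * (1 + ‖x / (2 * Real.pi)‖)) ^ k * ‖ft ψ x‖ := by
          gcongr
          exacts [(jb_pos x).le, jb_le x]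
      _ ≤ (2 * Real.pi) ^ k * M := by
          rw [mul_pow, mul_assoc, ft_eq_fourier]
          gcongr
          exact decay _
  have one_le : 1 ≤ jb x ^ r * jb x ^ k := by
    rw [← Real.rpow_natCast, ← Real.rpow_add (jb_pos x)]
    exact Real.one_le_rpow (one_le_jb x) (by linarith)
  calc ‖ft ψ x‖ ≤ jb x ^ r * jb x ^ k * ‖ft ψ x‖ := le_mul_of_one_le_left (norm_nonneg _) one_le
    _ ≤ (2 * Real.pi) ^ k * M * jb x ^ r := by
        rw [mul_assoc, mul_comm]
        have := Real.rpow_nonneg (jb_pos x).le r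
        gcongr

lemma ofReal_tsum_integral_le {ι X : Type*} [MeasurableSpace X] {μ : Measure X} (f : ι → X → ℝ) :
    ENNReal.ofReal (∑' i, ∫ x, f i x ∂μ) ≤ ∑' i, ∫⁻ x, ‖f i x‖ₑ ∂μ :=
  (Real.ofReal_le_enorm _).trans <| enorm_tsum_le_tsum_enorm.trans <|
    ENNReal.tsum_le_tsum fun _ => enorm_integral_le_lintegral_enorm _

lemma tsum_ejb_rpow_mul_enorm_rpow (hp : 0 ≤ p) {α : ℤ → ℂ}
    (hα : Summable fun k : ℤ => jb k ^ (s₀ * p) * ‖α k‖ ^ p) :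
    ∑' k : ℤ, (ejb k ^ s₀ * ‖α k‖ₑ) ^ p =
      ENNReal.ofReal (∑' k : ℤ, jb k ^ (s₀ * p) * ‖α k‖ ^ p) := by
  have jb_nonneg (k : ℤ) : 0 ≤ jb k ^ (s₀ * p) := Real.rpow_nonneg (jb_pos _).le _
  rw [ENNReal.ofReal_tsum_of_nonneg (fun k => mul_nonneg (jb_nonneg k) (by positivity)) hα]
  refine tsum_congr fun k => ?_
  rw [ENNReal.ofReal_mul (jb_nonneg k), ofReal_jb_rpow, ENNReal.mul_rpow_of_nonneg _ _ hp,
    ENNReal.rpow_mul, ← ENNReal.ofReal_rpow_of_nonneg (norm_nonneg _) hp, ofReal_norm]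

lemma tsum_integral_le_of_tsum_lintegral_le (hp : 0 ≤ p) {φ : ℝ → ℂ} {C : ℝ} (hC : 0 ≤ C)
    {α : ℤ → ℂ} (hα : Summable fun k : ℤ => jb k ^ (s₀ * p) * ‖α k‖ ^ p)
    (h : ∑' q : ℤ, ∫⁻ τ, ejb (τ + (q : ℝ) ^ 2) ^ (2 * (b - 1)) * ejb q ^ (2 * s) *
        ‖picardCoeff φ α q τ‖ₑ ^ 2 ≤
      ENNReal.ofReal C * (∑' k : ℤ, (ejb k ^ s₀ * ‖α k‖ₑ) ^ p) ^ (4 / p)) :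
    ∑' q : ℤ, ∫ τ, jb (τ + (q : ℝ) ^ 2) ^ (2 * (b - 1)) * jb q ^ (2 * s) *
        ‖picardCoeff φ α q τ‖ ^ 2 ≤
      C * (∑' k : ℤ, jb k ^ (s₀ * p) * ‖α k‖ ^ p) ^ (4 / p) := by
  have hS : 0 ≤ ∑' k : ℤ, jb k ^ (s₀ * p) * ‖α k‖ ^ p :=
    tsum_nonneg fun k => mul_nonneg (Real.rpow_nonneg (jb_pos _).le _) (by positivity)
  rw [tsum_ejb_rpow_mul_enorm_rpow hp hα, ENNReal.ofReal_rpow_of_nonneg hS (by positivity),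
    ← ENNReal.ofReal_mul hC] at h
  refine (ENNReal.ofReal_le_ofReal_iff (by positivity)).1 ((ofReal_tsum_integral_le _).trans ?_)
  simpa only [enorm_mul, enorm_jb_rpow, enorm_pow, enorm_norm] using h

end RealForm

/-- the first Picard iterate estimate `‖u₁‖_{X^{s,b}} ≲ ‖f‖²_{𝓗^{s₀,p}}`
at the level of Fourier coefficients. -/
theorem stmt0 (s₀ p s : ℝ) (hs₀l : -(1 / 2) < s₀) (hs₀u : s₀ ≤ 0)
    (hp2 : 2 ≤ p) (hp4 : p ≤ 4) (hsu : s ≤ 0) (hs : s < -1 + 2 / p) :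
    ∃ b₁ : ℝ, 1 / 2 < b₁ ∧ ∀ b : ℝ, 1 / 2 < b → b < b₁ →
      ∀ ψ : SchwartzMap ℝ ℂ, ∃ C : ℝ, 0 < C ∧
        ∀ α : ℤ → ℂ, Summable (fun k : ℤ => jb (k : ℝ) ^ (s₀ * p) * ‖α k‖ ^ p) →
          (∑' q : ℤ, ∫ τ : ℝ,
              jb (τ + (q : ℝ) ^ 2) ^ (2 * (b - 1)) * jb (q : ℝ) ^ (2 * s) *
                ‖∑' n : ℤ, (starRingEnd ℂ) (α n) * (starRingEnd ℂ) (α (-n - q)) *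
                    ft (⇑ψ) (τ - (n : ℝ) ^ 2 - ((n : ℝ) + (q : ℝ)) ^ 2)‖ ^ 2)
            ≤ C * (∑' k : ℤ, jb (k : ℝ) ^ (s₀ * p) * ‖α k‖ ^ p) ^ (4 / p) := by
  refine ⟨1 + s₀, by linarith, fun b _ hb ψ => ?_⟩
  obtain ⟨D, hD⟩ := exists_norm_ft_le_mul_jb_rpow ψ (2 * b - 4)
  obtain ⟨C, hC, hle⟩ := stmt0_general hs₀u hp2 hp4 hs hb.le hD
  exact ⟨C, hC, fun α hα => tsum_integral_le_of_tsum_lintegral_le (by linarith) hC.le hα (hle α)⟩
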